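/- Let g = sl2(C) ⋉ h be a finite-dimensional sympathetic complex Lie algebra whose Levi subalgebra is isomorphic to sl2(C) and whose radical h decomposes into 4 simple sl2(C)-modules V_n, V_m, V_p, V_k satisfying the convention, with Z(h) = V_k. Then dim_C g is odd. -/

import Mathlib

namespace Symp

variable (g : Type*) [LieRing g] [LieAlgebra ℂ g]

/-- A derivation of `g` is inner if it is given by the adjoint action of some element. -/
def IsInnerDer {g : Type*} [LieRing g] [LieAlgebra ℂ g] (D : LieDerivation ℂ g g) : Prop :=
  ∃ x : g, ∀ y : g, D y = ⁅x, y⁆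

/-- `g` is perfect: `[g,g] = g`. -/
def IsPerfectLie : Prop :=
  ⁅(⊤ : LieIdeal ℂ g), (⊤ : LieIdeal ℂ g)⁆ = ⊤

/-- A sympathetic Lie algebra: trivial centre, perfect, all derivations inner. -/
def IsSympathetic : Prop :=
  LieAlgebra.center ℂ g = ⊥ ∧ IsPerfectLie g ∧
    ∀ D : LieDerivation ℂ g g, IsInnerDer D

/-- `s` is a simple Levi subalgebra of `g`: it is a simple Lie algebra and a vector-space
complement to the radical. -/
def IsSimpleLevi (s : LieSubalgebra ℂ g) : Prop :=
  LieAlgebra.IsSimple ℂ s ∧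
    IsCompl s.toSubmodule (LieAlgebra.radical ℂ g).toSubmodule

/-- `s` is a Levi subalgebra of `g` isomorphic to `sl₂(ℂ)`. -/
def IsSl2Levi (s : LieSubalgebra ℂ g) : Prop :=
  Nonempty (s ≃ₗ⁅ℂ⁆ LieAlgebra.SpecialLinear.sl (Fin 2) ℂ) ∧
    IsCompl s.toSubmodule (LieAlgebra.radical ℂ g).toSubmodule

/-- The subspace spanned by all brackets `⁅x, y⁆` with `x ∈ A`, `y ∈ B`. -/
def lieSpan2 (A B : Submodule ℂ g) : Submodule ℂ g :=
  Submodule.span ℂ {z : g | ∃ x ∈ A, ∃ y ∈ B, z = ⁅x, y⁆}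

/-- A subspace of `g` invariant under the bracket action of the subalgebra `s`. -/
def Invariant (s : LieSubalgebra ℂ g) (W : Submodule ℂ g) : Prop :=
  ∀ x ∈ s, ∀ w ∈ W, ⁅x, w⁆ ∈ W

/-- `V` is an irreducible `s`-submodule of `g`. -/
def IsIrreducibleSMod (s : LieSubalgebra ℂ g) (V : Submodule ℂ g) : Prop :=
  V ≠ ⊥ ∧ Invariant g s V ∧
    ∀ W : Submodule ℂ g, W ≤ V → Invariant g s W → W = ⊥ ∨ W = V

/-- The family `V` is a decomposition of the radical of `g` into irreducible `s`-modules. -/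
def IsDecomp (s : LieSubalgebra ℂ g) {k : ℕ} (V : Fin k → Submodule ℂ g) : Prop :=
  (∀ i, IsIrreducibleSMod g s (V i)) ∧ iSupIndep V ∧
    (⨆ i, V i) = (LieAlgebra.radical ℂ g).toSubmodule

/-- The convention: any nonzero bracket of two of the modules equals one of them,
for a unique index. -/
def Convention {k : ℕ} (V : Fin k → Submodule ℂ g) : Prop :=
  ∀ i j, lieSpan2 g (V i) (V j) ≠ ⊥ → ∃! q, lieSpan2 g (V i) (V j) = V q

/-- The centre `Z(h)` of the radical `h = Rad(g)`, as a subspace of `g`. -/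
def centerRad : Submodule ℂ g where
  carrier := {x | x ∈ LieAlgebra.radical ℂ g ∧ ∀ y ∈ LieAlgebra.radical ℂ g, ⁅x, y⁆ = 0}
  add_mem' := by
    rintro a b ⟨ha, ha'⟩ ⟨hb, hb'⟩
    exact ⟨add_mem ha hb, fun y hy => by rw [add_lie, ha' y hy, hb' y hy, add_zero]⟩
  zero_mem' := ⟨zero_mem _, fun y _ => zero_lie y⟩
  smul_mem' := by
    rintro c a ⟨ha, ha'⟩
    exact ⟨SMulMemClass.smul_mem c ha, fun y hy => by rw [smul_lie, ha' y hy, smul_zero]⟩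

/-- The derived subalgebra `[h,h]` of the radical `h = Rad(g)`, as a subspace of `g`. -/
def derivedRad : Submodule ℂ g :=
  lieSpan2 g (LieAlgebra.radical ℂ g).toSubmodule (LieAlgebra.radical ℂ g).toSubmodule

end Symp

/-
Since `g` is perfect, `h = ⁅g, h⁆`, and by Lie's theorem `⁅g, h⁆` acts nilpotently on every
finite-dimensional `g`-module. Hence no nonzero subspace `W` satisfies `W ≤ ⁅h, W⁆`, so a module
is never recovered from itself by repeated brackets with `h`. A nonzero bracket
`⁅V_i, V_j⁆ = V_q` forces the highest weights to satisfy `q ≡ i + j` mod 2. Finally, numbers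
`w_i` with `w_q = w_i + w_j` for all nonzero brackets define a derivation of `g` that vanishes on
`sl₂`; it is inner, given by an element of `h` since `sl₂` has no centre, so that `w_i ≠ 0` would
give `V_i ≤ ⁅h, V_i⁆`. Hence `w = 0`.

If the number of odd highest weights among the four were odd, exactly one module would have a
parity different from the other three. In each such case the Jacobi identity, the fact that only
`V_k` is central in `h` and the constraints above leave so few possible brackets that a nonzero
`w` exists, a contradiction. So the sum of the highest weights is even, and
`dim g = 3 + ∑ (i + 1)` is odd.
-/

namespace Symp

section Nilpotency

variable {K L : Type*} [Field K] [LieRing L] [LieAlgebra K L]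

lemma le_lie_top_of_isCompl (hperf : ⁅(⊤ : LieIdeal K L), (⊤ : LieIdeal K L)⁆ = ⊤)
    {I : LieIdeal K L} {s : LieSubalgebra K L} (hs : IsCompl s.toSubmodule I.toSubmodule) :
    I ≤ ⁅(⊤ : LieIdeal K L), I⁆ := by
  have hsup : (⊤ : Submodule K L) ≤ ⁅(⊤ : LieIdeal K L), I⁆.toSubmodule ⊔ s.toSubmodule := by
    rw [← LieSubmodule.top_toSubmodule (R := K) (L := L) (M := L)]
    nth_rw 1 [← hperf]
    rw [LieSubmodule.lieIdeal_oper_eq_linear_span', Submodule.span_le]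
    rintro _ ⟨x, -, y, -, rfl⟩
    obtain ⟨a, ha, b, hb, rfl⟩ :=
      Submodule.mem_sup.1 (hs.sup_eq_top.symm ▸ Submodule.mem_top (x := x))
    obtain ⟨c, hc, d, hd, rfl⟩ :=
      Submodule.mem_sup.1 (hs.sup_eq_top.symm ▸ Submodule.mem_top (x := y))
    have hsplit : ⁅a + b, c + d⁆ = (⁅a + b, d⁆ - ⁅c, b⁆) + ⁅a, c⁆ := by
      rw [add_lie, add_lie, lie_add, lie_add, ← lie_skew c b]
      abel
    rw [SetLike.mem_coe, hsplit]
    exact Submodule.add_mem_sup (sub_mem (LieSubmodule.lie_mem_lie (LieSubmodule.mem_top _) hd)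
      (LieSubmodule.lie_mem_lie (LieSubmodule.mem_top _) hb)) (s.lie_mem ha hc)
  have hle : ⁅(⊤ : LieIdeal K L), I⁆.toSubmodule ≤ I.toSubmodule := LieSubmodule.lie_le_right I ⊤
  refine (eq_of_le_of_inf_le_of_sup_le (z := s.toSubmodule) hle ?_ (le_top.trans hsup)).ge
  rw [inf_comm, hs.inf_eq_bot]
  exact bot_le

variable [CharZero K] [IsAlgClosed K] (I : LieIdeal K L) [LieAlgebra.IsSolvable I]
  (M : Type*) [AddCommGroup M] [Module K M] [FiniteDimensional K M] [LieRingModule L M]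
  [LieModule K L M]

lemma exists_ne_zero_forall_lie_eq_zero [Nontrivial M] :
    ∃ m : M, m ≠ 0 ∧ ∀ x ∈ ⁅(⊤ : LieIdeal K L), I⁆, ⁅x, m⁆ = 0 := by
  obtain ⟨χ, hχ⟩ := LieModule.exists_nontrivial_weightSpace_of_isSolvable K I M
  obtain ⟨⟨m, hm⟩, hm0⟩ := exists_ne (0 : LieModule.weightSpace M χ)
  refine ⟨m, fun h => hm0 (Subtype.ext h), fun x hx => ?_⟩
  rw [← LieSubmodule.mem_toSubmodule, LieSubmodule.lieIdeal_oper_eq_linear_span'] at hx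
  induction hx using Submodule.span_induction with
  | zero => exact zero_lie m
  | add x y _ _ hx hy => rw [add_lie, hx, hy, add_zero]
  | smul c x _ hx => rw [smul_lie, hx, smul_zero]
  | mem x hx =>
    obtain ⟨a, -, b, hb, rfl⟩ := hx
    have ham : ⁅a, m⁆ ∈ LieModule.weightSpace M χ :=
      (LieModule.weightSpaceOfIsLieTower K M (L := L) χ).lie_mem hm
    rw [LieModule.mem_weightSpace] at hm ham
    have hbm : ⁅b, m⁆ = χ ⟨b, hb⟩ • m := hm ⟨b, hb⟩
    have hbam : ⁅b, ⁅a, m⁆⁆ = χ ⟨b, hb⟩ • ⁅a, m⁆ := ham ⟨b, hb⟩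
    rw [lie_lie, hbm, hbam, lie_smul, sub_self]

variable {M}

lemma eq_bot_of_le_lie {N : LieSubmodule K L M}
    (hN : N ≤ ⁅⁅(⊤ : LieIdeal K L), I⁆, N⁆) : N = ⊥ := by
  by_contra hne
  have : Nontrivial N := (LieSubmodule.nontrivial_iff_ne_bot K L M).2 hne
  obtain ⟨f, hf0, hf⟩ := exists_ne_zero_forall_lie_eq_zero I (Module.Dual K N)
  have hker : N.toSubmodule ≤ (LinearMap.ker f).map N.toSubmodule.subtype := by
    refine le_trans (LieSubmodule.toSubmodule_le_toSubmodule _ _ |>.2 hN) ?_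
    rw [LieSubmodule.lieIdeal_oper_eq_linear_span', Submodule.span_le]
    rintro _ ⟨x, hx, n, hn, rfl⟩
    have hfx : f ⁅x, (⟨n, hn⟩ : N)⁆ = 0 := by
      simpa using LinearMap.congr_fun (hf x hx) ⟨n, hn⟩
    exact ⟨_, hfx, rfl⟩
  refine hf0 (LinearMap.ext fun n => ?_)
  obtain ⟨n', hn', hn⟩ := hker n.2
  rwa [← Subtype.ext hn]

end Nilpotency

section LieSpan2

variable {g : Type*} [LieRing g] [LieAlgebra ℂ g]

lemma lie_mem_lieSpan2 {A B : Submodule ℂ g} {x y : g} (hx : x ∈ A) (hy : y ∈ B) :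
    ⁅x, y⁆ ∈ lieSpan2 g A B :=
  Submodule.subset_span ⟨x, hx, y, hy, rfl⟩

lemma lieSpan2_le {A B C : Submodule ℂ g} :
    lieSpan2 g A B ≤ C ↔ ∀ x ∈ A, ∀ y ∈ B, ⁅x, y⁆ ∈ C := by
  refine ⟨fun h x hx y hy => h (lie_mem_lieSpan2 hx hy), fun h => Submodule.span_le.2 ?_⟩
  rintro _ ⟨x, hx, y, hy, rfl⟩
  exact h x hx y hy

lemma lieSpan2_mono {A B A' B' : Submodule ℂ g} (hA : A ≤ A') (hB : B ≤ B') :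
    lieSpan2 g A B ≤ lieSpan2 g A' B' :=
  lieSpan2_le.2 fun _ hx _ hy => lie_mem_lieSpan2 (hA hx) (hB hy)

lemma lieSpan2_comm (A B : Submodule ℂ g) : lieSpan2 g A B = lieSpan2 g B A := by
  have hle (A B : Submodule ℂ g) : lieSpan2 g A B ≤ lieSpan2 g B A :=
    lieSpan2_le.2 fun x hx y hy => lie_skew x y ▸ neg_mem (lie_mem_lieSpan2 hy hx)
  exact le_antisymm (hle A B) (hle B A)

lemma lieSpan2_eq_bot {A B : Submodule ℂ g} :
    lieSpan2 g A B = ⊥ ↔ ∀ x ∈ A, ∀ y ∈ B, ⁅x, y⁆ = 0 := by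
  rw [eq_bot_iff, lieSpan2_le]
  rfl

variable [FiniteDimensional ℂ g]

lemma eq_bot_of_le_lieSpan2_radical (hperf : IsPerfectLie g) {s : LieSubalgebra ℂ g}
    (hs : IsCompl s.toSubmodule (LieAlgebra.radical ℂ g).toSubmodule) {W : Submodule ℂ g}
    (hW : W ≤ lieSpan2 g (LieAlgebra.radical ℂ g).toSubmodule W) : W = ⊥ := by
  set N : LieIdeal ℂ g := LieSubmodule.lieSpan ℂ g (W : Set g)
  have hWN : W ≤ N.toSubmodule := LieSubmodule.subset_lieSpan
  have hN : N ≤ ⁅⁅(⊤ : LieIdeal ℂ g), LieAlgebra.radical ℂ g⁆, N⁆ := by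
    refine LieSubmodule.lieSpan_le.2 (hW.trans (lieSpan2_le.2 fun x hx w hw => ?_))
    exact LieSubmodule.lie_mem_lie (le_lie_top_of_isCompl hperf hs hx) (hWN hw)
  rw [eq_bot_of_le_lie _ hN] at hWN
  exact le_bot_iff.1 hWN

end LieSpan2

section Sl2Triple

variable {K L : Type*} [Field K] [LieRing L] [LieAlgebra K L] {h e f : L}

lemma exists_isSl2Triple_of_lieEquiv_sl
    (φ : L ≃ₗ⁅K⁆ LieAlgebra.SpecialLinear.sl (Fin 2) K) :
    ∃ (h e f : L) (t : IsSl2Triple h e f), t.toLieSubalgebra K = ⊤ := by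
  let H := LieAlgebra.SpecialLinear.singleSubSingle (0 : Fin 2) 1 (1 : K)
  let E := LieAlgebra.SpecialLinear.single (0 : Fin 2) 1 zero_ne_one (1 : K)
  let F := LieAlgebra.SpecialLinear.single (1 : Fin 2) 0 one_ne_zero (1 : K)
  have hEF : ⁅E, F⁆ = H := Subtype.ext <| by
    rw [LieAlgebra.SpecialLinear.sl_bracket]
    simp [E, F, H]
  have hHE : ⁅H, E⁆ = 2 • E := Subtype.ext <| by
    rw [LieAlgebra.SpecialLinear.sl_bracket]
    simp [E, H, sub_mul, mul_sub, two_nsmul]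
  have hHF : ⁅H, F⁆ = -(2 • F) := Subtype.ext <| by
    rw [LieAlgebra.SpecialLinear.sl_bracket]
    simp [F, H, sub_mul, mul_sub, two_nsmul, ← neg_add']
  have hspan (x : LieAlgebra.SpecialLinear.sl (Fin 2) K) :
      x = x.1 0 1 • E + x.1 1 0 • F + x.1 0 0 • ⁅E, F⁆ := by
    have htrace : x.1 0 0 + x.1 1 1 = 0 := (Matrix.trace_fin_two x.1).symm.trans x.2
    rw [hEF]
    ext i j
    fin_cases i <;> fin_cases j <;> simp [E, F, H, eq_neg_of_add_eq_zero_right htrace]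
  have t : IsSl2Triple (φ.symm H) (φ.symm E) (φ.symm F) := by
    refine ⟨?_, ?_, ?_, ?_⟩
    · intro hH0
      have hH : H = 0 := by simpa using hH0
      simpa [H] using congrArg (fun x => x.1 0 0) hH
    · rw [← LieEquiv.map_lie, hEF]
    · rw [← LieEquiv.map_lie, hHE, map_nsmul]
    · rw [← LieEquiv.map_lie, hHF, map_neg, map_nsmul]
  refine ⟨_, _, _, t, eq_top_iff.2 fun x _ => IsSl2Triple.mem_toLieSubalgebra_iff.2 ?_⟩
  refine ⟨(φ x).1 0 1, (φ x).1 1 0, (φ x).1 0 0, ?_⟩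
  simpa [← LieEquiv.map_lie] using congrArg φ.symm (hspan (φ x))

variable [CharZero K]

lemma linearIndependent_of_isSl2Triple (t : IsSl2Triple h e f) :
    LinearIndependent K ![e, f, h] := by
  refine Module.End.eigenvectors_linearIndependent' (LieAlgebra.ad K L h) ![2, -2, 0] ?_ _ ?_
  · intro i j hij
    fin_cases i <;> fin_cases j <;> simp_all [eq_neg_iff_add_eq_zero, neg_eq_iff_add_eq_zero]
  · intro i
    fin_cases i
    · simpa [Module.End.hasEigenvector_iff, t.e_ne_zero] using t.lie_h_e_smul K
    · simpa [Module.End.hasEigenvector_iff, t.f_ne_zero] using t.lie_lie_smul_f K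
    · simp [Module.End.hasEigenvector_iff, t.h_ne_zero]

lemma finrank_eq_three_of_isSl2Triple {t : IsSl2Triple h e f} (ht : t.toLieSubalgebra K = ⊤) :
    Module.finrank K L = 3 := by
  have hspan : Submodule.span K (Set.range ![e, f, h]) = ⊤ := by
    have := congrArg LieSubalgebra.toSubmodule ht
    simpa [IsSl2Triple.toLieSubalgebra, Set.insert_comm, Set.pair_comm] using this
  rw [← finrank_top, ← hspan, finrank_span_eq_card (linearIndependent_of_isSl2Triple t),
    Fintype.card_fin]

lemma center_eq_bot_of_isSl2Triple {t : IsSl2Triple h e f} (ht : t.toLieSubalgebra K = ⊤) :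
    LieAlgebra.center K L = ⊥ := by
  refine eq_bot_iff.2 fun x hx => ?_
  obtain ⟨a, b, c, rfl⟩ := IsSl2Triple.mem_toLieSubalgebra_iff.1 (ht ▸ LieSubalgebra.mem_top x)
  have hcomm (y : L) : ⁅y, a • e + b • f + c • ⁅e, f⁆⁆ = 0 :=
    (LieModule.mem_maxTrivSubmodule K L L _).1 hx y
  have hh : a • (2 : K) • e + b • -((2 : K) • f) = 0 := by
    simpa [t.lie_e_f, t.lie_h_e_smul K, t.lie_lie_smul_f K] using hcomm h
  have he : b • h - c • (2 : K) • e = 0 := by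
    simpa [t.lie_e_f, ← lie_skew e h, t.lie_h_e_smul K, sub_eq_add_neg] using hcomm e
  have hli := Fintype.linearIndependent_iff.1 (linearIndependent_of_isSl2Triple (K := K) t)
  have hab := hli ![2 * a, -(2 * b), 0] (by
    rw [← hh]
    simp only [Fin.sum_univ_three, Matrix.cons_val]
    module)
  have hc := hli ![-(2 * c), 0, b] (by
    rw [← he]
    simp only [Fin.sum_univ_three, Matrix.cons_val]
    module)
  have ha0 : a = 0 := by simpa using hab 0
  have hb0 : b = 0 := by simpa using hc 2
  have hc0 : c = 0 := by simpa using hc 0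
  simp [ha0, hb0, hc0]

end Sl2Triple

section Parity

variable {K M N : Type*} [Field K] [AddCommGroup M] [Module K M] [AddCommGroup N] [Module K N]

/-- The sum of the eigenspaces of `T` for the integers of parity `ε`. For `T` the action of `h` in
an `sl₂`-triple, this splits a module into its even and odd parts. -/
def parityEigenspace (T : Module.End K M) (ε : ZMod 2) : Submodule K M :=
  ⨆ k ∈ {k : ℤ | (k : ZMod 2) = ε}, T.eigenspace (k : K)

lemma mem_parityEigenspace_of_eq_smul {T : Module.End K M} {k : ℤ} {m : M}
    (hm : T m = (k : K) • m) : m ∈ parityEigenspace T k :=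
  Submodule.mem_iSup_of_mem k (Submodule.mem_iSup_of_mem rfl (Module.End.mem_eigenspace_iff.2 hm))

lemma parityEigenspace_le {T : Module.End K M} {ε : ZMod 2} {W : Submodule K M} :
    parityEigenspace T ε ≤ W ↔ ∀ k : ℤ, k = ε → T.eigenspace (k : K) ≤ W :=
  iSup₂_le_iff

lemma disjoint_parityEigenspace [CharZero K] (T : Module.End K M) {ε δ : ZMod 2} (hne : ε ≠ δ) :
    Disjoint (parityEigenspace T ε) (parityEigenspace T δ) := by
  refine (T.eigenspaces_iSupIndep.comp Int.cast_injective).disjoint_biSup_biSup ?_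
  exact Set.disjoint_left.2 fun k hk hk' => hne (hk.symm.trans hk')

lemma map_parityEigenspace_le {T : Module.End K M} {S : Module.End K N} {φ : M →ₗ[K] N}
    (hφ : φ ∘ₗ T = S ∘ₗ φ) (ε : ZMod 2) :
    (parityEigenspace T ε).map φ ≤ parityEigenspace S ε := by
  rw [Submodule.map_le_iff_le_comap, parityEigenspace_le]
  rintro k rfl m hm
  refine mem_parityEigenspace_of_eq_smul ?_
  rw [← LinearMap.comp_apply, ← hφ, LinearMap.comp_apply, Module.End.mem_eigenspace_iff.1 hm,
    map_smul]

variable {L : Type*} [LieRing L] [LieAlgebra K L] [LieRingModule L M] [LieModule K L M]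

lemma lie_mem_parityEigenspace {h x : L} {m : M} {ε δ : ZMod 2}
    (hx : x ∈ parityEigenspace (LieAlgebra.ad K L h) ε)
    (hm : m ∈ parityEigenspace (LieModule.toEnd K L M h) δ) :
    ⁅x, m⁆ ∈ parityEigenspace (LieModule.toEnd K L M h) (ε + δ) := by
  have hle : parityEigenspace (LieModule.toEnd K L M h) δ ≤
      (parityEigenspace (LieModule.toEnd K L M h) (ε + δ)).comap (LieModule.toEnd K L M x) := by
    rw [parityEigenspace_le]
    rintro l rfl n hn
    suffices parityEigenspace (LieAlgebra.ad K L h) ε ≤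
        (parityEigenspace (LieModule.toEnd K L M h) (ε + l)).comap
          ((LieModule.toEnd K L M : L →ₗ[K] Module.End K M).flip n) from this hx
    rw [parityEigenspace_le]
    rintro k rfl y hy
    rw [Module.End.mem_eigenspace_iff, LieModule.toEnd_apply_apply] at hn
    rw [Module.End.mem_eigenspace_iff, LieAlgebra.ad_apply] at hy
    rw [← Int.cast_add]
    refine mem_parityEigenspace_of_eq_smul (?_ : ⁅h, ⁅y, n⁆⁆ = _ • ⁅y, n⁆)
    rw [leibniz_lie, hy, hn, smul_lie, lie_smul, ← add_smul, Int.cast_add]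
  exact hle hm

end Parity

section Irreducible

variable {K L M : Type*} [Field K] [LieRing L] [LieAlgebra K L] [AddCommGroup M]
  [Module K M] [LieRingModule L M] [LieModule K L M] [LieModule.IsIrreducible K L M] {h e f : L}
  {t : IsSl2Triple h e f} {m : M}

lemma span_pow_toEnd_eq_top (ht : t.toLieSubalgebra K = ⊤) {μ : K}
    (P : t.HasPrimitiveVectorWith m μ) :
    Submodule.span K (Set.range fun k : ℕ => (LieModule.toEnd K L M f ^ k) m) = ⊤ := by
  set W := Submodule.span K (Set.range fun k : ℕ => (LieModule.toEnd K L M f ^ k) m)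
  have hW (k : ℕ) : (LieModule.toEnd K L M f ^ k) m ∈ W := Submodule.subset_span ⟨k, rfl⟩
  have he : W ≤ W.comap (LieModule.toEnd K L M e) := by
    refine Submodule.span_le.2 (Set.range_subset_iff.2 fun k => ?_)
    change ⁅e, (LieModule.toEnd K L M f ^ k) m⁆ ∈ W
    cases k with
    | zero => simp [P.lie_e]
    | succ k => exact P.lie_e_pow_succ_toEnd_f k ▸ W.smul_mem _ (hW k)
  have hf : W ≤ W.comap (LieModule.toEnd K L M f) := by
    refine Submodule.span_le.2 (Set.range_subset_iff.2 fun k => ?_)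
    change ⁅f, (LieModule.toEnd K L M f ^ k) m⁆ ∈ W
    exact P.lie_f_pow_toEnd_f k ▸ hW (k + 1)
  let N : LieSubmodule K L M :=
    { W with
      lie_mem := fun {x w} hw => by
        obtain ⟨a, b, c, rfl⟩ :=
          IsSl2Triple.mem_toLieSubalgebra_iff.1 (ht ▸ LieSubalgebra.mem_top x)
        rw [add_lie, add_lie, smul_lie, smul_lie, smul_lie, lie_lie]
        exact add_mem (add_mem (W.smul_mem a (he hw)) (W.smul_mem b (hf hw)))
          (W.smul_mem c (sub_mem (he (hf hw)) (hf (he hw)))) }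
  have hmN : m ∈ N := hW 0
  have hN : N ≠ ⊥ := fun hN => P.ne_zero ((LieSubmodule.mem_bot m).1 (hN ▸ hmN))
  exact congrArg LieSubmodule.toSubmodule ((IsSimpleOrder.eq_bot_or_eq_top N).resolve_left hN)

variable [CharZero K] [FiniteDimensional K M]

lemma finrank_eq_add_one (ht : t.toLieSubalgebra K = ⊤) {n : ℕ}
    (P : t.HasPrimitiveVectorWith m (n : K)) : Module.finrank K M = n + 1 := by
  let b (k : Fin (n + 1)) : M := (LieModule.toEnd K L M f ^ (k : ℕ)) m
  have hli : LinearIndependent K b := by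
    refine Module.End.eigenvectors_linearIndependent' (LieModule.toEnd K L M h)
      (fun k : Fin (n + 1) => (n : K) - 2 * ((k : ℕ) : K)) (fun i j hij => ?_) b fun k => ?_
    · simpa [Fin.ext_iff] using hij
    · exact Module.End.hasEigenvector_iff.2 ⟨Module.End.mem_eigenspace_iff.2
        (P.lie_h_pow_toEnd_f k), P.pow_toEnd_f_ne_zero_of_eq_nat rfl (Nat.lt_succ_iff.1 k.2)⟩
  have hspan : ⊤ ≤ Submodule.span K (Set.range b) := by
    rw [← span_pow_toEnd_eq_top ht P, Submodule.span_le, Set.range_subset_iff]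
    intro k
    rcases le_or_gt k n with hk | hk
    · exact Submodule.subset_span ⟨⟨k, Nat.lt_succ_of_le hk⟩, rfl⟩
    · simp [Module.End.pow_map_zero_of_le hk (P.pow_toEnd_f_eq_zero_of_eq_nat rfl)]
  rw [Module.finrank_eq_card_basis (Module.Basis.mk hli hspan), Fintype.card_fin]

lemma parityEigenspace_eq_top [IsAlgClosed K] (ht : t.toLieSubalgebra K = ⊤) :
    parityEigenspace (LieModule.toEnd K L M h) (Module.finrank K M + 1) = ⊤ := by
  have := LieModule.nontrivial_of_isIrreducible K L M
  obtain ⟨μ, m, -, P⟩ := t.exists_hasPrimitiveVectorWith (R := K) (M := M)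
  obtain ⟨n, rfl⟩ := P.exists_nat
  rw [eq_top_iff, ← span_pow_toEnd_eq_top ht P, Submodule.span_le, Set.range_subset_iff]
  intro k
  have hpar : (Module.finrank K M + 1 : ZMod 2) = ((n - 2 * k : ℤ) : ZMod 2) := by
    rw [finrank_eq_add_one ht P]
    push_cast
    linear_combination (1 + (k : ZMod 2)) * (CharTwo.two_eq_zero : (2 : ZMod 2) = 0)
  rw [hpar]
  exact mem_parityEigenspace_of_eq_smul (by simpa using P.lie_h_pow_toEnd_f k)

end Irreducible

/-- The combinatorial shadow of a radical `⨁ i, V i` satisfying the convention: `B i j q` stands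
for `⁅V i, V j⁆ = V q`, `z` for the index of the centre of the radical, and `p i` for the parity
of the highest weight of `V i`. The field `rigid` encodes that a grading of the radical by natural
numbers would give an outer derivation. -/
structure IsBracketTable {ι : Type*} (B : ι → ι → ι → Prop) (z : ι) (p : ι → ZMod 2) : Prop where
  comm : ∀ {i j q}, B i j q → B j i q
  unique : ∀ {i j q r}, B i j q → B i j r → q = r
  parity : ∀ {i j q}, B i j q → p q = p i + p j
  wellFounded : WellFounded fun i q => ∃ j, B i j q
  not_center : ∀ j q, ¬ B z j q
  exists_of_ne_center : ∀ {i}, i ≠ z → ∃ j q, B i j q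
  jacobi : ∀ {i j c k r}, B i j c → B c k r →
    (∃ t u, B j k t ∧ B i t u) ∨ ∃ t u, B i k t ∧ B j t u
  rigid : ∀ w : ι → ℕ, (∀ i j q, B i j q → w q = w i + w j) → w = 0

namespace IsBracketTable

variable {ι : Type*} {B : ι → ι → ι → Prop} {z : ι} {p : ι → ZMod 2}

lemma left_ne_center (h : IsBracketTable B z p) {i j q : ι} (hB : B i j q) : i ≠ z := by
  rintro rfl
  exact h.not_center j q hB

lemma asymm (h : IsBracketTable B z p) {i j k q : ι} (hB : B i j q) : ¬ B q k i := fun hB' =>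
  h.wellFounded.asymmetric _ _ ⟨j, hB⟩ ⟨k, hB'⟩

lemma irrefl (h : IsBracketTable B z p) (i j : ι) : ¬ B i j i := fun hB => h.asymm hB hB

lemma exists_bracket_eq_center (h : IsBracketTable B z p) : ∃ i j, B i j z := by
  classical
  by_contra! hz
  suffices hw : (Pi.single z 1 : ι → ℕ) = 0 by simpa using congrFun hw z
  refine h.rigid _ fun i j q hB => ?_
  have hi := h.left_ne_center hB
  have hj := h.left_ne_center (h.comm hB)
  have hq : q ≠ z := by
    rintro rfl
    exact hz i j hB
  simp [hi, hj, hq]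

lemma exists_bracket_ne_center (h : IsBracketTable B z p) : ∃ i j q, B i j q ∧ q ≠ z := by
  classical
  by_contra! hz
  suffices hw : (Function.update 1 z 2 : ι → ℕ) = 0 by simpa using congrFun hw z
  refine h.rigid _ fun i j q hB => ?_
  have hi := h.left_ne_center hB
  have hj := h.left_ne_center (h.comm hB)
  simp [hi, hj, hz i j q hB]

lemma exists_parity_ne (h : IsBracketTable B z p) : ∃ k ≠ z, p k ≠ p z + 1 := by
  by_contra! hp
  have hzero {i j q : ι} (hB : B i j q) : p q = 0 := by
    rw [h.parity hB, hp i (h.left_ne_center hB), hp j (h.left_ne_center (h.comm hB)),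
      CharTwo.add_self_eq_zero]
  obtain ⟨i, j, hz⟩ := h.exists_bracket_eq_center
  obtain ⟨k, l, q, hB, hq⟩ := h.exists_bracket_ne_center
  simpa [hzero hz, hzero hB] using hp q hq

section UniqueOdd

variable {x : ι}

lemma not_bracket_of_unique_odd (h : IsBracketTable B z p) (hx : p x = 1) (hp : ∀ k ≠ x, p k = 0)
    (i j : ι) : ¬ B i j x := by
  intro hB
  have hi : i ≠ x := by
    rintro rfl
    exact h.irrefl _ _ hB
  have hj : j ≠ x := by
    rintro rfl
    exact h.irrefl _ _ (h.comm hB)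
  simpa [hx, hp i hi, hp j hj] using h.parity hB

lemma right_eq_of_unique_odd (h : IsBracketTable B z p) (hx : p x = 1) (hp : ∀ k ≠ x, p k = 0)
    {k t : ι} (hB : B x k t) : k = x := by
  by_contra hk
  have ht : t ≠ x := by
    rintro rfl
    exact h.irrefl _ _ hB
  simpa [hx, hp k hk, hp t ht] using h.parity hB

lemma eq_center_of_unique_odd (h : IsBracketTable B z p) (hx : p x = 1) (hp : ∀ k ≠ x, p k = 0)
    {k t : ι} (hB : B x k t) : t = z := by
  obtain rfl := h.right_eq_of_unique_odd hx hp hB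
  by_contra ht
  obtain ⟨l, r, hr⟩ := h.exists_of_ne_center ht
  obtain ⟨u, v, hu, hv⟩ := or_self_iff.1 (h.jacobi hB hr)
  obtain rfl := h.right_eq_of_unique_odd hx hp hv
  exact h.not_bracket_of_unique_odd hx hp _ _ hu

variable {y e : ι}

lemma not_self_bracket_of_unique_odd (h : IsBracketTable B z p) (hx : p x = 1)
    (hp : ∀ k ≠ x, p k = 0) (hd : [x, y, e, z].Nodup) (hι : ∀ i, i ∈ [x, y, e, z]) :
    ¬ B y y e := by
  classical
  intro hy
  have hye {t : ι} (ht : B y e t) : t = z := by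
    have htx : t ≠ x := fun htx => h.not_bracket_of_unique_odd hx hp _ _ (htx ▸ ht)
    have hty : t ≠ y := fun hty => h.irrefl _ _ (hty ▸ ht)
    have hte : t ≠ e := fun hte => h.irrefl _ _ (hte ▸ h.comm ht)
    simpa [htx, hty, hte] using hι t
  have hee (r : ι) : ¬ B e e r := by
    intro hr
    obtain ⟨t, u, ht, hu⟩ := or_self_iff.1 (h.jacobi hy hr)
    obtain rfl := hye ht
    exact h.not_center _ _ (h.comm hu)
  have htable {i j q : ι} (hB : B i j q) :
      (i = x ∧ j = x ∧ q = z) ∨ (i = y ∧ j = y ∧ q = e) ∨ (i = y ∧ j = e ∧ q = z) ∨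
        (i = e ∧ j = y ∧ q = z) := by
    have hx_right {k : ι} (hk : B x k q) := h.right_eq_of_unique_odd hx hp hk
    have hx_center {k : ι} (hk : B x k q) := h.eq_center_of_unique_odd hx hp hk
    have hy_unique (hq : B y y q) := h.unique hy hq
    have hi := h.left_ne_center hB
    have hj := h.left_ne_center (h.comm hB)
    grind [hι i, hι j, h.comm hB]
  have hw : (fun i => if i = x then 3 else if i = y then 2 else if i = e then 4 else 6) = 0 := by
    refine h.rigid _ fun i j q hB => ?_
    rcases htable hB with ⟨rfl, rfl, rfl⟩ | ⟨rfl, rfl, rfl⟩ | ⟨rfl, rfl, rfl⟩ | ⟨rfl, rfl, rfl⟩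
    all_goals grind
  simpa using congrFun hw x

lemma not_unique_odd (h : IsBracketTable B z p) (hp : ∀ k ≠ x, p k = 0)
    (hd : [x, y, e, z].Nodup) (hι : ∀ i, i ∈ [x, y, e, z]) : p x ≠ 1 := by
  intro hx
  obtain ⟨i, j, q, hB, hqz⟩ := h.exists_bracket_ne_center
  have hiz := h.left_ne_center hB
  have hjz := h.left_ne_center (h.comm hB)
  have hix : i ≠ x := fun hi => hqz (h.eq_center_of_unique_odd hx hp (hi ▸ hB))
  have hjx : j ≠ x := fun hj => hqz (h.eq_center_of_unique_odd hx hp (hj ▸ h.comm hB))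
  have hqx : q ≠ x := fun hq => h.not_bracket_of_unique_odd hx hp _ _ (hq ▸ hB)
  have hqi : q ≠ i := fun hq => h.irrefl _ _ (hq ▸ hB)
  have hqj : q ≠ j := fun hq => h.irrefl _ _ (hq ▸ h.comm hB)
  have hsq : (i = y ∧ j = y ∧ q = e) ∨ (i = e ∧ j = e ∧ q = y) := by
    grind [hι i, hι j, hι q]
  rcases hsq with ⟨rfl, rfl, rfl⟩ | ⟨rfl, rfl, rfl⟩
  · exact h.not_self_bracket_of_unique_odd hx hp hd hι hB
  · have hswap : [x, q, j, z].Perm [x, j, q, z] := (List.Perm.swap _ _ _).cons _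
    exact h.not_self_bracket_of_unique_odd hx hp (hswap.nodup hd)
      (fun i => hswap.mem_iff.1 (hι i)) hB

end UniqueOdd

section UniqueEven

variable {x y e : ι}

lemma trichotomy_of_unique_even (h : IsBracketTable B z p) (he : p e = 0) (hp : ∀ k ≠ e, p k = 1)
    {i j q : ι} (hB : B i j q) :
    (i ≠ e ∧ j ≠ e ∧ q = e) ∨ (i = e ∧ j ≠ e ∧ q ≠ e) ∨ (i ≠ e ∧ j = e ∧ q ≠ e) := by
  have hpar := h.parity hB
  by_cases hi : i = e <;> by_cases hj : j = e <;> by_cases hq : q = e <;>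
    grind [h.irrefl i j, h.irrefl j i, h.comm hB, CharTwo.add_self_eq_zero (1 : ZMod 2)]

lemma not_bracket_of_unique_even (h : IsBracketTable B z p) (he : p e = 0)
    (hp : ∀ k ≠ e, p k = 1) (hd : [e, x, y, z].Nodup) (hι : ∀ i, i ∈ [e, x, y, z]) :
    ¬ B e x y := by
  classical
  intro hxy
  have hy (j : ι) : ¬ B y j e := fun hj => h.asymm hj hxy
  have hyx : ¬ B e y x := fun hyx => h.asymm (h.comm hxy) (h.comm hyx)
  have hyy : ¬ B e y y := fun hyy => h.irrefl _ _ (h.comm hyy)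
  have htable {i j q : ι} (hB : B i j q) :
      (i = x ∧ j = x ∧ q = e) ∨ (i = e ∧ j = x ∧ q = y) ∨ (i = x ∧ j = e ∧ q = y) ∨
        (i = e ∧ j = y ∧ q = z) ∨ (i = y ∧ j = e ∧ q = z) := by
    have hx_unique (hx : B e x q) := h.unique hxy hx
    have hi := h.left_ne_center hB
    have hj := h.left_ne_center (h.comm hB)
    grind [hι i, hι j, hι q, h.comm hB, h.trichotomy_of_unique_even he hp hB]
  have hw : (fun i => if i = x then 1 else if i = y then 3 else if i = e then 2 else 5) = 0 := by
    refine h.rigid _ fun i j q hB => ?_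
    rcases htable hB with ⟨rfl, rfl, rfl⟩ | ⟨rfl, rfl, rfl⟩ | ⟨rfl, rfl, rfl⟩ | ⟨rfl, rfl, rfl⟩ |
      ⟨rfl, rfl, rfl⟩
    all_goals grind
  simpa using congrFun hw x

lemma not_unique_even (h : IsBracketTable B z p) (hp : ∀ k ≠ e, p k = 1)
    (hd : [e, x, y, z].Nodup) (hι : ∀ i, i ∈ [e, x, y, z]) : p e ≠ 0 := by
  classical
  intro he
  have hswap : [e, x, y, z].Perm [e, y, x, z] := (List.Perm.swap _ _ _).cons _
  have hxy : ¬ B e x y := h.not_bracket_of_unique_even he hp hd hι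
  have hyx : ¬ B e y x := h.not_bracket_of_unique_even he hp (hswap.nodup hd)
    fun i => hswap.mem_iff.1 (hι i)
  have heven {k q : ι} (hB : B e k q) : q = z := by
    have hqk : q ≠ k := fun hq => h.irrefl _ _ (hq ▸ h.comm hB)
    have hk := h.left_ne_center (h.comm hB)
    grind [hι k, hι q, h.trichotomy_of_unique_even he hp hB]
  have hw : (fun i => if i = e then 2 else if i = z then 3 else 1) = 0 := by
    refine h.rigid _ fun i j q hB => ?_
    have hi := h.left_ne_center hB
    have hj := h.left_ne_center (h.comm hB)
    rcases h.trichotomy_of_unique_even he hp hB with ⟨hie, hje, rfl⟩ | ⟨rfl, hje, -⟩ | ⟨hie, rfl, -⟩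
    · simp [hie, hje, hi, hj]
    · obtain rfl := heven hB
      simp [hi.symm, hje, hj]
    · obtain rfl := heven (h.comm hB)
      simp [hj.symm, hie, hi]
  simpa using congrFun hw e

end UniqueEven

theorem sum_parity_eq_zero {B : Fin 4 → Fin 4 → Fin 4 → Prop} {z : Fin 4} {p : Fin 4 → ZMod 2}
    (h : IsBracketTable B z p) : ∑ i, p i = 0 := by
  by_contra hsum
  have hunique : ∀ p : Fin 4 → ZMod 2, ∑ i, p i ≠ 0 → ∃ x, ∀ k ≠ x, p k = p x + 1 := by decide
  have hrest : ∀ x z : Fin 4, x ≠ z →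
      ∃ y e, [x, y, e, z].Nodup ∧ ∀ i, i ∈ [x, y, e, z] := by decide
  obtain ⟨x, hx⟩ := hunique p hsum
  obtain ⟨k, hkz, hpk⟩ := h.exists_parity_ne
  have hxz : x ≠ z := by
    rintro rfl
    exact hpk (hx k hkz)
  obtain ⟨y, e, hd, hι⟩ := hrest x z hxz
  have hdich : ∀ a : ZMod 2, a = 0 ∨ a = 1 := by decide
  rcases hdich (p x) with hx0 | hx1
  · exact h.not_unique_even (by simpa [hx0] using hx) hd hι hx0
  · exact h.not_unique_odd (by simpa [hx1, CharTwo.add_self_eq_zero] using hx) hd hι hx1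

end IsBracketTable

section Derivations

lemma iSupIndep_option_elim {α ι : Type*} [CompleteLattice α] [IsModularLattice α] {a : α}
    {u : ι → α} (ha : Disjoint a (⨆ i, u i)) (hu : iSupIndep u) :
    iSupIndep fun o : Option ι => o.elim a u := by
  rintro (_ | i)
  · refine ha.mono_right (iSup₂_le ?_)
    rintro (_ | j) hj
    · exact absurd rfl hj
    · exact le_iSup u j
  · have hle : ⨆ (o : Option ι) (_ : o ≠ some i), o.elim a u ≤ (⨆ (j) (_ : j ≠ i), u j) ⊔ a := by
      refine iSup₂_le ?_
      rintro (_ | j) hj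
      · exact le_sup_right
      · exact le_sup_of_le_left (le_iSup₂_of_le j (fun hji => hj (congrArg some hji)) le_rfl)
    refine (Disjoint.disjoint_sup_right_of_disjoint_sup_left (hu i) ?_).mono_right hle
    exact ha.symm.mono_left (sup_le (le_iSup u i) (iSup₂_le fun j _ => le_iSup u j))

lemma isInternal_option_elim {R M ι : Type*} [DecidableEq ι] [Ring R] [AddCommGroup M] [Module R M]
    {S : Submodule R M} {U : ι → Submodule R M} (hS : IsCompl S (⨆ i, U i)) (hU : iSupIndep U) :
    DirectSum.IsInternal fun o : Option ι => o.elim S U :=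
  DirectSum.isInternal_submodule_of_iSupIndep_of_iSup_eq_top
    (iSupIndep_option_elim hS.disjoint hU) (by rw [iSup_option]; exact hS.sup_eq_top)

variable {R ι : Type*} [DecidableEq ι] [CommRing R]

lemma exists_end_apply_eq_smul {M : Type*} [AddCommGroup M] [Module R M] {U : ι → Submodule R M}
    (hU : DirectSum.IsInternal U) (w : ι → R) :
    ∃ T : Module.End R M, ∀ i, ∀ x ∈ U i, T x = w i • x := by
  let e := LinearEquiv.ofBijective (DirectSum.coeLinearMap U) hU
  refine ⟨DirectSum.toModule R ι M (fun i => w i • (U i).subtype) ∘ₗ e.symm.toLinearMap,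
    fun i x hx => ?_⟩
  have hsymm : e.symm x = DirectSum.lof R ι (fun i => U i) i ⟨x, hx⟩ := by
    rw [LinearEquiv.symm_apply_eq]
    exact (DirectSum.coeLinearMap_lof U i ⟨x, hx⟩).symm
  simp [hsymm]

variable {L : Type*} [LieRing L] [LieAlgebra R L] {U : ι → Submodule R L}

lemma exists_lieDerivation_apply_eq_smul (hU : DirectSum.IsInternal U) {w : ι → R}
    (hw : ∀ i j, ∀ x ∈ U i, ∀ y ∈ U j, ⁅x, y⁆ = 0 ∨ ∃ q, ⁅x, y⁆ ∈ U q ∧ w q = w i + w j) :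
    ∃ D : LieDerivation R L L, ∀ i, ∀ x ∈ U i, D x = w i • x := by
  obtain ⟨T, hT⟩ := exists_end_apply_eq_smul hU w
  have htop (x : L) : x ∈ ⨆ i, U i := hU.submodule_iSup_eq_top ▸ Submodule.mem_top
  suffices hleib : ∀ x y : L, T ⁅x, y⁆ = ⁅x, T y⁆ - ⁅y, T x⁆ from ⟨⟨T, hleib⟩, hT⟩
  intro x y
  induction htop x using Submodule.iSup_induction' with
  | zero => simp
  | add x x' _ _ hx hx' =>
    rw [add_lie, map_add, hx, hx', map_add, lie_add, add_lie]
    abel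
  | mem i x hx =>
    induction htop y using Submodule.iSup_induction' with
    | zero => simp
    | add y y' _ _ hy hy' =>
      rw [lie_add, map_add, hy, hy', map_add, lie_add, add_lie]
      abel
    | mem j y hy =>
      rw [hT i x hx, hT j y hy, lie_smul, lie_smul, ← lie_skew y x, smul_neg, sub_neg_eq_add,
        ← add_smul]
      rcases hw i j x hx y hy with h0 | ⟨q, hq, hwq⟩
      · rw [h0, map_zero, smul_zero]
      · rw [hT q _ hq, hwq, add_comm]

lemma mem_of_forall_lie_eq_zero {I : LieIdeal R L} {s : LieSubalgebra R L}
    (hs : IsCompl s.toSubmodule I.toSubmodule) (hcenter : LieAlgebra.center R s = ⊥) {x : L}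
    (hx : ∀ y ∈ s, ⁅x, y⁆ = 0) : x ∈ I := by
  obtain ⟨a, ha, c, hc, rfl⟩ :=
    Submodule.mem_sup.1 (hs.sup_eq_top.symm ▸ Submodule.mem_top (x := x))
  suffices ha0 : (⟨a, ha⟩ : s) ∈ LieAlgebra.center R s by
    rw [hcenter, LieSubmodule.mem_bot] at ha0
    rw [show a = 0 from congrArg Subtype.val ha0, zero_add]
    exact hc
  refine (LieModule.mem_maxTrivSubmodule R s s _).2 fun y => Subtype.ext ?_
  have hsum : ⁅a, (y : L)⁆ + ⁅c, (y : L)⁆ = 0 := by rw [← add_lie, hx y y.2]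
  have hswap : ⁅(y : L), a⁆ = ⁅c, (y : L)⁆ := by
    rw [← lie_skew, eq_neg_of_add_eq_zero_left hsum, neg_neg]
  have hmem : ⁅(y : L), a⁆ ∈ I := hswap ▸ lie_mem_left R L I c y hc
  exact Submodule.disjoint_def.1 hs.disjoint _ (s.lie_mem y.2 ha) hmem

end Derivations

section LeviModules

variable {g : Type*} [LieRing g] [LieAlgebra ℂ g] {s : LieSubalgebra ℂ g} {V : Submodule ℂ g}

/-- An `s`-invariant subspace of `g`, as a Lie submodule of the `s`-module `g`. -/
def Invariant.toLieSubmodule (hV : Invariant g s V) : LieSubmodule ℂ s g :=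
  { V with lie_mem := fun {x m} hm => hV x x.2 m hm }

lemma IsIrreducibleSMod.isIrreducible (hV : IsIrreducibleSMod g s V) :
    LieModule.IsIrreducible ℂ s (Invariant.toLieSubmodule hV.2.1) := by
  have : Nontrivial (Invariant.toLieSubmodule hV.2.1) := Submodule.nontrivial_iff_ne_bot.2 hV.1
  refine LieModule.IsIrreducible.mk fun N hN => ?_
  have hinv : Invariant g s (N.toSubmodule.map V.subtype) := by
    rintro x hx _ ⟨m, hm, rfl⟩
    exact ⟨_, N.lie_mem (x := ⟨x, hx⟩) hm, rfl⟩
  have hinj := Submodule.map_injective_of_injective V.subtype_injective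
  have hmap : N.toSubmodule.map V.subtype ≠ ⊥ := fun h0 =>
    hN ((LieSubmodule.toSubmodule_eq_bot N).1 (hinj (h0.trans (Submodule.map_bot _).symm)))
  have hVN := (hV.2.2 _ (Submodule.map_subtype_le V N.toSubmodule) hinv).resolve_left hmap
  exact LieSubmodule.toSubmodule_injective (hinj (hVN.trans (Submodule.map_subtype_top V).symm))

variable [FiniteDimensional ℂ g]

lemma IsIrreducibleSMod.le_parityEigenspace (hV : IsIrreducibleSMod g s V) {h e f : s}
    {t : IsSl2Triple h e f} (ht : t.toLieSubalgebra ℂ = ⊤) :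
    V ≤ parityEigenspace (LieAlgebra.ad ℂ g h) (Module.finrank ℂ V + 1) := by
  have := hV.isIrreducible
  have htop := parityEigenspace_eq_top (M := Invariant.toLieSubmodule hV.2.1) ht
  intro v hv
  have hv' : (⟨v, hv⟩ : Invariant.toLieSubmodule hV.2.1) ∈
    parityEigenspace (LieModule.toEnd ℂ s _ h) _ := htop ▸ Submodule.mem_top
  exact map_parityEigenspace_le (φ := V.subtype) rfl _ ⟨⟨v, hv⟩, hv', rfl⟩

end LeviModules

section Brackets

variable {g : Type*} [LieRing g] [LieAlgebra ℂ g]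

lemma lieSpan2_lieSpan2_le (A B C : Submodule ℂ g) :
    lieSpan2 g (lieSpan2 g A B) C ≤
      lieSpan2 g A (lieSpan2 g B C) ⊔ lieSpan2 g B (lieSpan2 g A C) := by
  refine lieSpan2_le.2 fun x hx c hc => ?_
  suffices hle : lieSpan2 g A B ≤
      (lieSpan2 g A (lieSpan2 g B C) ⊔ lieSpan2 g B (lieSpan2 g A C)).comap
        ((LieModule.toEnd ℂ g g : g →ₗ[ℂ] Module.End ℂ g).flip c) from hle hx
  refine lieSpan2_le.2 fun a ha b hb => ?_
  change ⁅⁅a, b⁆, c⁆ ∈ lieSpan2 g A (lieSpan2 g B C) ⊔ lieSpan2 g B (lieSpan2 g A C)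
  rw [lie_lie]
  exact sub_mem
    (Submodule.mem_sup_left (lie_mem_lieSpan2 ha (lie_mem_lieSpan2 hb hc)))
    (Submodule.mem_sup_right (lie_mem_lieSpan2 hb (lie_mem_lieSpan2 ha hc)))

variable {k : ℕ} {V : Fin k → Submodule ℂ g}

/-- The bracket relation `⁅V i, V j⁆ = V q` among the modules of a decomposition. -/
def BracketRel (V : Fin k → Submodule ℂ g) (i j q : Fin k) : Prop :=
  lieSpan2 g (V i) (V j) = V q

lemma BracketRel.comm {i j q : Fin k} (h : BracketRel V i j q) : BracketRel V j i q :=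
  (lieSpan2_comm _ _).trans h

lemma Convention.lieSpan2_eq_bot_or_exists (hconv : Convention g V) (i j : Fin k) :
    lieSpan2 g (V i) (V j) = ⊥ ∨ ∃ q, BracketRel V i j q :=
  or_iff_not_imp_left.2 fun h => (hconv i j h).exists

lemma Convention.lieSpan2_lieSpan2_eq_bot_or_exists (hconv : Convention g V) (i j l : Fin k) :
    lieSpan2 g (V i) (lieSpan2 g (V j) (V l)) = ⊥ ∨
      ∃ t u, BracketRel V j l t ∧ BracketRel V i t u := by
  rcases hconv.lieSpan2_eq_bot_or_exists j l with h0 | ⟨t, ht⟩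
  · left
    rw [h0, lieSpan2_eq_bot]
    rintro x - y rfl
    exact lie_zero x
  · rw [ht]
    exact (hconv.lieSpan2_eq_bot_or_exists i t).imp_right fun ⟨u, hu⟩ => ⟨t, u, ht, hu⟩

lemma Convention.jacobi (hconv : Convention g V) (hne : ∀ i, V i ≠ ⊥) {i j c l r : Fin k}
    (hij : BracketRel V i j c) (hcl : BracketRel V c l r) :
    (∃ t u, BracketRel V j l t ∧ BracketRel V i t u) ∨
      ∃ t u, BracketRel V i l t ∧ BracketRel V j t u := by
  by_contra! hcon
  have hi := (hconv.lieSpan2_lieSpan2_eq_bot_or_exists i j l).resolve_right (by grind)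
  have hj := (hconv.lieSpan2_lieSpan2_eq_bot_or_exists j i l).resolve_right (by grind)
  have hle := lieSpan2_lieSpan2_le (V i) (V j) (V l)
  rw [hi, hj, hij, hcl, sup_bot_eq] at hle
  exact hne r (le_bot_iff.1 hle)

end Brackets

section Decomposition

variable {g : Type*} [LieRing g] [LieAlgebra ℂ g] {s : LieSubalgebra ℂ g} {k : ℕ}
  {V : Fin k → Submodule ℂ g}

namespace IsDecomp

variable (hdec : IsDecomp g s V)
include hdec

lemma ne_bot (i : Fin k) : V i ≠ ⊥ := (hdec.1 i).1

lemma le_radical (i : Fin k) : V i ≤ (LieAlgebra.radical ℂ g).toSubmodule :=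
  hdec.2.2 ▸ le_iSup V i

lemma bracketRel_unique {i j q r : Fin k} (hq : BracketRel V i j q) (hr : BracketRel V i j r) :
    q = r :=
  hdec.2.1.injective hdec.ne_bot (hq.symm.trans hr)

lemma not_bracketRel_center {z : Fin k} (hZ : centerRad g = V z) (j q : Fin k) :
    ¬ BracketRel V z j q := fun hq => hdec.ne_bot q <| by
  rw [← hq, lieSpan2_eq_bot, ← hZ]
  exact fun x hx y hy => hx.2 y (hdec.le_radical j hy)

lemma exists_bracketRel_of_ne (hconv : Convention g V) {z i : Fin k}
    (hZ : centerRad g = V z) (hi : i ≠ z) : ∃ j q, BracketRel V i j q := by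
  by_contra! hcon
  have hzero (j : Fin k) := (hconv.lieSpan2_eq_bot_or_exists i j).resolve_right (by grind)
  have hle : V i ≤ V z := by
    rw [← hZ]
    refine fun x hx => ⟨hdec.le_radical i hx, fun y hy => ?_⟩
    rw [← LieSubmodule.mem_toSubmodule, ← hdec.2.2] at hy
    have hker : ⨆ j, V j ≤ LinearMap.ker (LieAlgebra.ad ℂ g x) :=
      iSup_le fun j => lieSpan2_eq_bot.1 (hzero j) x hx
    exact hker hy
  exact hdec.ne_bot i ((hdec.2.1.pairwiseDisjoint hi).eq_bot_of_le hle)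

lemma parity_eq [FiniteDimensional ℂ g] {h e f : s} {t : IsSl2Triple h e f}
    (ht : t.toLieSubalgebra ℂ = ⊤) {i j q : Fin k} (hB : BracketRel V i j q) :
    (Module.finrank ℂ (V q) + 1 : ZMod 2) =
      (Module.finrank ℂ (V i) + 1) + (Module.finrank ℂ (V j) + 1) := by
  by_contra hne
  have hle (i : Fin k) := (hdec.1 i).le_parityEigenspace ht
  have hq : V q ≤ parityEigenspace (LieAlgebra.ad ℂ g h)
      ((Module.finrank ℂ (V i) + 1) + (Module.finrank ℂ (V j) + 1)) := by
    rw [← hB]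
    exact lieSpan2_le.2 fun x hx y hy => lie_mem_parityEigenspace (hle i hx) (hle j hy)
  exact hdec.ne_bot q (disjoint_self.1 ((disjoint_parityEigenspace _ hne).mono (hle q) hq))

variable (hs : IsCompl s.toSubmodule (LieAlgebra.radical ℂ g).toSubmodule)
include hs

lemma isInternal : DirectSum.IsInternal fun o : Option (Fin k) => o.elim s.toSubmodule V :=
  isInternal_option_elim (hdec.2.2.symm ▸ hs) hdec.2.1

lemma exists_lieDerivation (hconv : Convention g V) {w : Fin k → ℂ}
    (hw : ∀ i j q, BracketRel V i j q → w q = w i + w j) :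
    ∃ D : LieDerivation ℂ g g, (∀ y ∈ s, D y = 0) ∧ ∀ i, ∀ x ∈ V i, D x = w i • x := by
  obtain ⟨D, hD⟩ := exists_lieDerivation_apply_eq_smul (hdec.isInternal hs)
    (w := fun o => o.elim 0 w) (by
      rintro (_ | i) (_ | j) x hx y hy
      · exact .inr ⟨none, s.lie_mem hx hy, (add_zero 0).symm⟩
      · exact .inr ⟨some j, (hdec.1 j).2.1 x hx y hy, (zero_add _).symm⟩
      · refine .inr ⟨some i, ?_, (add_zero _).symm⟩
        exact lie_skew x y ▸ neg_mem ((hdec.1 i).2.1 y hy x hx)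
      · rcases hconv.lieSpan2_eq_bot_or_exists i j with h0 | ⟨q, hq⟩
        · exact .inl (lieSpan2_eq_bot.1 h0 x hx y hy)
        · exact .inr ⟨some q, hq.le (lie_mem_lieSpan2 hx hy), hw i j q hq⟩)
  exact ⟨D, fun y hy => (hD none y hy).trans (zero_smul ℂ y), fun i => hD (some i)⟩

variable [FiniteDimensional ℂ g]

lemma wellFounded_bracketRel (hperf : IsPerfectLie g) :
    WellFounded fun i q => ∃ j, BracketRel V i j q := by
  refine WellFounded.wellFounded_iff_has_min.2 fun S ⟨q₀, hq₀⟩ => ?_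
  by_contra! hmin
  set W := ⨆ q ∈ S, V q
  have hWS {q : Fin k} (hq : q ∈ S) : V q ≤ W := le_iSup₂_of_le q hq le_rfl
  have hW : W ≤ lieSpan2 g (LieAlgebra.radical ℂ g).toSubmodule W := by
    refine iSup₂_le fun q hq => ?_
    obtain ⟨i, hi, j, hB⟩ := hmin q hq
    rw [← hB.comm]
    exact lieSpan2_mono (hdec.le_radical j) (hWS hi)
  exact hdec.ne_bot q₀ (le_bot_iff.1 (eq_bot_of_le_lieSpan2_radical hperf hs hW ▸ hWS hq₀))

lemma weight_eq_zero (hperf : IsPerfectLie g) (hder : ∀ D : LieDerivation ℂ g g, IsInnerDer D)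
    (hcenter : LieAlgebra.center ℂ s = ⊥) (hconv : Convention g V) {w : Fin k → ℂ}
    (hw : ∀ i j q, BracketRel V i j q → w q = w i + w j) : w = 0 := by
  obtain ⟨D, hDs, hDV⟩ := hdec.exists_lieDerivation hs hconv hw
  obtain ⟨c, hc⟩ := hder D
  have hcrad : c ∈ LieAlgebra.radical ℂ g :=
    mem_of_forall_lie_eq_zero hs hcenter fun y hy => (hc y).symm.trans (hDs y hy)
  funext i
  by_contra hwi
  refine hdec.ne_bot i (eq_bot_of_le_lieSpan2_radical hperf hs fun x hx => ?_)
  rw [← inv_smul_smul₀ hwi x, ← hDV i x hx, hc x]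
  exact Submodule.smul_mem _ _ (lie_mem_lieSpan2 hcrad hx)

lemma isBracketTable (hperf : IsPerfectLie g) (hder : ∀ D : LieDerivation ℂ g g, IsInnerDer D)
    {h e f : s} {t : IsSl2Triple h e f} (ht : t.toLieSubalgebra ℂ = ⊤) (hconv : Convention g V)
    {z : Fin k} (hZ : centerRad g = V z) :
    IsBracketTable (BracketRel V) z fun i => Module.finrank ℂ (V i) + 1 where
  comm := BracketRel.comm
  unique := hdec.bracketRel_unique
  parity := hdec.parity_eq ht
  wellFounded := hdec.wellFounded_bracketRel hs hperf
  not_center := hdec.not_bracketRel_center hZ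
  exists_of_ne_center := hdec.exists_bracketRel_of_ne hconv hZ
  jacobi := hconv.jacobi hdec.ne_bot
  rigid w hw := by
    have hwℂ := hdec.weight_eq_zero hs hperf hder (center_eq_bot_of_isSl2Triple ht) hconv
      (w := fun i => (w i : ℂ)) fun i j q hB => by rw [hw i j q hB, Nat.cast_add]
    exact funext fun i => Nat.cast_eq_zero.1 (congrFun hwℂ i)

lemma finrank_eq_add_sum :
    Module.finrank ℂ g = Module.finrank ℂ s + ∑ i, Module.finrank ℂ (V i) := by
  have (o : Option (Fin k)) : Module.Finite ℂ (o.elim s.toSubmodule V : Submodule ℂ g) :=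
    inferInstance
  rw [← (LinearEquiv.ofBijective (DirectSum.coeLinearMap _) (hdec.isInternal hs)).finrank_eq,
    Module.finrank_directSum, Fintype.sum_option]
  rfl

end IsDecomp

end Decomposition

end Symp

theorem stmt15_general (g : Type*) [LieRing g] [LieAlgebra ℂ g] [FiniteDimensional ℂ g]
    (hperf : Symp.IsPerfectLie g) (hder : ∀ D : LieDerivation ℂ g g, Symp.IsInnerDer D)
    (s : LieSubalgebra ℂ g) (hs : Symp.IsSl2Levi g s)
    (V : Fin 4 → Submodule ℂ g) (hdec : Symp.IsDecomp g s V)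
    (hconv : Symp.Convention g V) (z : Fin 4) (hZ : Symp.centerRad g = V z) :
    Odd (Module.finrank ℂ g) := by
  obtain ⟨⟨φ⟩, hcompl⟩ := hs
  obtain ⟨h, e, f, t, ht⟩ := Symp.exists_isSl2Triple_of_lieEquiv_sl φ
  have hsum := (hdec.isBracketTable hcompl hperf hder ht hconv hZ).sum_parity_eq_zero
  rw [Finset.sum_add_distrib, Finset.sum_const, Finset.card_univ, Fintype.card_fin] at hsum
  rw [← ZMod.natCast_eq_one_iff_odd, hdec.finrank_eq_add_sum hcompl,
    Symp.finrank_eq_three_of_isSl2Triple ht]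
  push_cast at hsum ⊢
  linear_combination hsum - (CharTwo.two_eq_zero : (2 : ZMod 2) = 0)

/-- for a sympathetic `g = sl₂(ℂ) ⋉ h` with 4 simple modules satisfying the
convention and `Z(h) = V_k` (here `V 3`), the dimension of `g` is odd. -/
theorem stmt15 (g : Type*) [LieRing g] [LieAlgebra ℂ g] [FiniteDimensional ℂ g]
    (hsymp : Symp.IsSympathetic g)
    (s : LieSubalgebra ℂ g) (hs : Symp.IsSl2Levi g s)
    (V : Fin 4 → Submodule ℂ g) (hdec : Symp.IsDecomp g s V)
    (hconv : Symp.Convention g V)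
    (hZ : Symp.centerRad g = V 3) :
    Odd (Module.finrank ℂ g) :=
  stmt15_general g hsymp.2.1 hsymp.2.2 s hs V hdec hconv 3 hZ
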